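/- Let G be a countable discrete amenable group acting continuously on a compact metric space (X,d). For any tempered Følner sequence {F_n} in G satisfying lim_{n→∞} |F_n|/log n = ∞, the Bowen topological entropy of the whole space equals the topological entropy: h^B_top(X,{F_n}) = h_top(X,G). -/

import Mathlib

open Filter Set MeasureTheory Topology ENNReal Pointwise

variable {G X : Type*}

section Defs

variable [Group G] [MetricSpace X] [MulAction G X]

/-- The Bowen ball `B_F(x,ε) = {y : d(gx,gy) < ε for all g ∈ F}`. -/
def bowenBall (F : Finset G) (x : X) (ε : ℝ) : Set X :=
  {y : X | ∀ g ∈ F, dist (g • x) (g • y) < ε}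

/-- A Følner sequence: `|F_n ∆ gF_n|/|F_n| → 0` for every `g ∈ G`. -/
def IsFolnerSeq (F : ℕ → Finset G) : Prop :=
  ∀ g : G, Tendsto
    (fun n => ((symmDiff (F n : Set G) ((g * ·) '' (F n : Set G))).ncard : ℝ) / (F n).card)
    atTop (𝓝 0)

/-- A tempered sequence: `|⋃_{k<n} F_k⁻¹ F_n| ≤ C |F_n|` for all `n`. -/
def IsTemperedSeq (F : ℕ → Finset G) : Prop :=
  ∃ C : ℝ, 0 < C ∧ ∀ n : ℕ,
    ((⋃ k ∈ Finset.range n, ((F k : Set G)⁻¹ * (F n : Set G))).ncard : ℝ) ≤ C * (F n).card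

/-- The growth condition `lim_n |F_n| / log n = ∞`. -/
def GrowthCond (F : ℕ → Finset G) : Prop :=
  Tendsto (fun n : ℕ => ((F n).card : ℝ) / Real.log n) atTop atTop

/-- `M(Z,N,ε,s,{F_n})`: infimum of `∑ exp(-s |F_{n_i}|)` over countable families of Bowen
balls `B_{F_{n_i}}(x_i,ε)`, `n_i ≥ N`, covering `Z`. -/
noncomputable def ballM (F : ℕ → Finset G) (Z : Set X) (N : ℕ) (ε s : ℝ) : ℝ≥0∞ :=
  ⨅ (I : Set (X × ℕ)) (_ : I.Countable) (_ : ∀ p ∈ I, N ≤ p.2)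
    (_ : Z ⊆ ⋃ p ∈ I, bowenBall (F p.2) p.1 ε),
    ∑' p : I, ENNReal.ofReal (Real.exp (-s * ((F (p : X × ℕ).2).card : ℝ)))

/-- `M(Z,ε,s,{F_n}) = lim_{N→∞} M(Z,N,ε,s,{F_n})` (the quantity is nondecreasing in `N`). -/
noncomputable def ballMN (F : ℕ → Finset G) (Z : Set X) (ε s : ℝ) : ℝ≥0∞ :=
  ⨆ N : ℕ, ballM F Z N ε s

/-- `M(Z,s,{F_n}) = lim_{ε→0} M(Z,ε,s,{F_n})` (the quantity is nondecreasing as `ε` decreases). -/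
noncomputable def ballMtot (F : ℕ → Finset G) (Z : Set X) (s : ℝ) : ℝ≥0∞ :=
  ⨆ (ε : ℝ) (_ : 0 < ε), ballMN F Z ε s

/-- The Bowen topological entropy of `Z` along `{F_n}`: the critical value of `s` at which
`M(Z,s,{F_n})` jumps from `+∞` to `0`, i.e. `inf {s : M(Z,s,{F_n}) = 0}`. -/
noncomputable def bowenEnt (F : ℕ → Finset G) (Z : Set X) : ℝ≥0∞ :=
  ⨅ (s : ℝ) (_ : ballMtot F Z s = 0), ENNReal.ofReal s

/-- The weighted quantity `W(f,N,ε,s,{F_n})`. -/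
noncomputable def wtW (F : ℕ → Finset G) (f : X → ℝ≥0∞) (N : ℕ) (ε s : ℝ) : ℝ≥0∞ :=
  ⨅ (I : Set (X × ℕ)) (c : X × ℕ → ℝ≥0∞) (_ : I.Countable)
    (_ : ∀ p ∈ I, N ≤ p.2 ∧ 0 < c p ∧ c p < ⊤)
    (_ : ∀ x : X, f x ≤ ∑' p : I, c (p : X × ℕ) *
        (bowenBall (F (p : X × ℕ).2) (p : X × ℕ).1 ε).indicator (fun _ => (1 : ℝ≥0∞)) x),
    ∑' p : I, c (p : X × ℕ) * ENNReal.ofReal (Real.exp (-s * ((F (p : X × ℕ).2).card : ℝ)))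

/-- `W(Z,N,ε,s,{F_n}) = W(χ_Z,N,ε,s,{F_n})`. -/
noncomputable def wtWset (F : ℕ → Finset G) (Z : Set X) (N : ℕ) (ε s : ℝ) : ℝ≥0∞ :=
  wtW F (Z.indicator fun _ => (1 : ℝ≥0∞)) N ε s

/-- `W(Z,ε,s,{F_n}) = lim_{N→∞} W(Z,N,ε,s,{F_n})`. -/
noncomputable def wtWN (F : ℕ → Finset G) (Z : Set X) (ε s : ℝ) : ℝ≥0∞ :=
  ⨆ N : ℕ, wtWset F Z N ε s

/-- `W(Z,s,{F_n}) = lim_{ε→0} W(Z,ε,s,{F_n})`. -/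
noncomputable def wtWtot (F : ℕ → Finset G) (Z : Set X) (s : ℝ) : ℝ≥0∞ :=
  ⨆ (ε : ℝ) (_ : 0 < ε), wtWN F Z ε s

/-- The weighted Bowen topological entropy of `Z` along `{F_n}`. -/
noncomputable def wtBowenEnt (F : ℕ → Finset G) (Z : Set X) : ℝ≥0∞ :=
  ⨅ (s : ℝ) (_ : wtWtot F Z s = 0), ENNReal.ofReal s

/-- A finite open cover of `X`. -/
def IsFinOpenCover (𝒰 : Finset (Set X)) : Prop :=
  (∀ U ∈ 𝒰, IsOpen U) ∧ ⋃₀ (𝒰 : Set (Set X)) = Set.univ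

/-- `N(⋁_{g∈F} g⁻¹𝒰)`: the minimal cardinality of a subcover of the refined cover, whose members
are the sets `X(𝐔) = ⋂_{g∈F} g⁻¹ U_g` with `U_g ∈ 𝒰`. -/
noncomputable def coverNum (𝒰 : Finset (Set X)) (F : Finset G) : ℕ :=
  sInf {k : ℕ | ∃ Λ : Finset (G → Set X), Λ.card = k ∧
    (∀ u ∈ Λ, ∀ g ∈ F, u g ∈ 𝒰) ∧
    (⋃ u ∈ Λ, ⋂ g ∈ F, (fun y => g • y) ⁻¹' u g) = Set.univ}

/-- `h_top(G,𝒰) = lim_n (1/|F_n|) log N(⋁_{g∈F_n} g⁻¹𝒰)` (the limit exists by Ornstein–Weiss,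
hence equals the `limsup`). -/
noncomputable def coverTopEnt (F : ℕ → Finset G) (𝒰 : Finset (Set X)) : ℝ :=
  limsup (fun n => Real.log (coverNum 𝒰 (F n)) / (F n).card) atTop

/-- The topological entropy `h_top(X,G)`, the supremum over finite open covers. -/
noncomputable def topEnt (X : Type*) [MetricSpace X] [MulAction G X] (F : ℕ → Finset G) : ℝ≥0∞ :=
  ⨆ (𝒰 : Finset (Set X)) (_ : IsFinOpenCover 𝒰), ENNReal.ofReal (coverTopEnt F 𝒰)

/-- `M(Z,𝒰,N,s,{F_n})`: infimum of `∑_{𝐔∈Λ} exp(-s m(𝐔))` over collections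
`Λ ⊆ ⋃_{j≥N} 𝒲_{F_j}(𝒰)` covering `Z`; an element `𝐔 ∈ 𝒲_{F_j}(𝒰)` is encoded as a pair
`(j, u)` with `u g ∈ 𝒰` for `g ∈ F_j` (and `u g = ∅` elsewhere), `X(𝐔) = ⋂_{g∈F_j} g⁻¹ (u g)`
and `m(𝐔) = |F_j|`. -/
noncomputable def covM (F : ℕ → Finset G) (𝒰 : Finset (Set X)) (Z : Set X) (N : ℕ) (s : ℝ) :
    ℝ≥0∞ :=
  ⨅ (Λ : Set (ℕ × (G → Set X)))
    (_ : ∀ p ∈ Λ, N ≤ p.1 ∧ (∀ g ∈ F p.1, p.2 g ∈ 𝒰) ∧ (∀ g ∉ F p.1, p.2 g = ∅))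
    (_ : Z ⊆ ⋃ p ∈ Λ, ⋂ g ∈ F p.1, (fun y => g • y) ⁻¹' p.2 g),
    ∑' p : Λ, ENNReal.ofReal (Real.exp (-s * ((F (p : ℕ × (G → Set X)).1).card : ℝ)))

/-- `M(Z,𝒰,s,{F_n}) = lim_{N→∞} M(Z,𝒰,N,s,{F_n})`. -/
noncomputable def covMtot (F : ℕ → Finset G) (𝒰 : Finset (Set X)) (Z : Set X) (s : ℝ) : ℝ≥0∞ :=
  ⨆ N : ℕ, covM F 𝒰 Z N s

/-- The cover-based Bowen topological entropy `h^B_top(𝒰,Z,{F_n}) = inf {s : M(Z,𝒰,s,{F_n}) = 0}`. -/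
noncomputable def covBowenEnt (F : ℕ → Finset G) (𝒰 : Finset (Set X)) (Z : Set X) : ℝ≥0∞ :=
  ⨅ (s : ℝ) (_ : covMtot F 𝒰 Z s = 0), ENNReal.ofReal s

/-- `diam(𝒰) = max {diam U : U ∈ 𝒰}`. -/
noncomputable def coverDiam (𝒰 : Finset (Set X)) : ℝ≥0∞ :=
  ⨆ U ∈ 𝒰, EMetric.diam U

end Defs

section MeasureDefs

variable [Group G] [MetricSpace X] [MulAction G X] [MeasurableSpace X]

/-- The quantity `-(1/m) log μ(B)`, with value `+∞` when `μ B = 0`. -/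
noncomputable def locTerm (μ : Measure X) (B : Set X) (m : ℕ) : ℝ≥0∞ :=
  if μ B = 0 then ⊤ else ENNReal.ofReal (-(Real.log ((μ B).toReal)) / (m : ℝ))

/-- The lower local entropy `h̲_μ^{loc}(x,ε,{F_n}) = liminf_n -(1/|F_n|) log μ(B_{F_n}(x,ε))`. -/
noncomputable def lowLoc (μ : Measure X) (F : ℕ → Finset G) (x : X) (ε : ℝ) : ℝ≥0∞ :=
  liminf (fun n => locTerm μ (bowenBall (F n) x ε) (F n).card) atTop

/-- The upper local entropy `limsup_n -(1/|F_n|) log μ(B_{F_n}(x,ε))`. -/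
noncomputable def upLoc (μ : Measure X) (F : ℕ → Finset G) (x : X) (ε : ℝ) : ℝ≥0∞ :=
  limsup (fun n => locTerm μ (bowenBall (F n) x ε) (F n).card) atTop

/-- `h̲_μ^{loc}(x,{F_n}) = lim_{ε→0} h̲_μ^{loc}(x,ε,{F_n})` (a monotone limit, i.e. the
supremum over `ε > 0`). -/
noncomputable def lowLocPt (μ : Measure X) (F : ℕ → Finset G) (x : X) : ℝ≥0∞ :=
  ⨆ (ε : ℝ) (_ : 0 < ε), lowLoc μ F x ε

/-- `h̲_μ^{loc}({F_n}) = ∫_X h̲_μ^{loc}(x,{F_n}) dμ(x)`. -/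
noncomputable def lowLocEnt (μ : Measure X) (F : ℕ → Finset G) : ℝ≥0∞ :=
  ∫⁻ x, lowLocPt μ F x ∂μ

/-- A finite measurable partition of `X`, presented as `P : Fin k → Set X`. -/
def IsMeasPartition {k : ℕ} (P : Fin k → Set X) : Prop :=
  (∀ i, MeasurableSet (P i)) ∧ Pairwise (Function.onFun Disjoint P) ∧ (⋃ i, P i) = Set.univ

/-- The static entropy `H_μ(𝒫_F)` of the join `𝒫_F = ⋁_{g∈F} g⁻¹𝒫`; its atoms are the
nonempty sets `⋂_{g∈F} g⁻¹ P(u g)` (distinct choices `u` yield disjoint atoms, and empty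
atoms contribute `0`). -/
noncomputable def partH (μ : Measure X) {k : ℕ} (P : Fin k → Set X) (F : Finset G) : ℝ :=
  letI := Classical.decEq G
  ∑ u : (↥F → Fin k),
    Real.negMulLog ((μ (⋂ g : ↥F, (fun y => (g : G) • y) ⁻¹' P (u g))).toReal)

/-- `h_μ(G,𝒫) = liminf_n (1/|F_n|) H_μ(𝒫_{F_n})`. -/
noncomputable def partEnt (μ : Measure X) (F : ℕ → Finset G) {k : ℕ} (P : Fin k → Set X) : ℝ :=
  liminf (fun n => partH μ P (F n) / (F n).card) atTop

/-- The measure-theoretic entropy `h_μ(X,G) = sup_𝒫 h_μ(G,𝒫)` (it is independent of the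
Følner sequence used to compute it). -/
noncomputable def measEnt (μ : Measure X) (F : ℕ → Finset G) : ℝ≥0∞ :=
  ⨆ (k : ℕ) (P : Fin k → Set X) (_ : IsMeasPartition P), ENNReal.ofReal (partEnt μ F P)

/-- Ergodicity of the `G`-action w.r.t. `μ`. -/
def IsErgodicGAction (G : Type*) [Group G] [MulAction G X] (μ : Measure X) : Prop :=
  ∀ A : Set X, MeasurableSet A → (∀ g : G, (g • ·) ⁻¹' A = A) → μ A = 0 ∨ μ A = 1

end MeasureDefs

/-!
If `𝒰` is a cover by sets of diameter less than `ε`, then a minimal subcover of its refinement over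
`F n` gives a cover of `X` by `coverNum 𝒰 (F n)` Bowen balls of index `n`. Hence the Bowen entropy
is at most the topological entropy as soon as `|F n| → ∞`.

Conversely, let `ε` be a Lebesgue number of `𝒰` and `M(X, ε, s) = 0`. Then `X` is covered by
finitely many Bowen balls of arbitrarily large indices and arbitrarily small total weight `η`. Fix
a finite `D ⊆ G`. For `x : X` and `c ∈ D` the point `c • x` lies in one of these balls, of index
`n` say, so along the tile `F n * c` the orbit of `x` follows a fixed itinerary through `𝒰`. By
temperedness a greedy choice selects tiles which are almost disjoint (overlap at most `δ`) and
cover a fixed proportion `γ` of `D`. Given the pattern of selected tiles, only the rest of `D` has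
to be covered. If covering numbers are already known to grow at rate at most `t`, then this gains
`t` per covered point and loses `s / (1 - δ)`, because the weights sum to at most `e ^ (η |D|)`
over all patterns. So the rate `t` improves to `t - γ (t - s / (1 - δ))`, up to an arbitrarily
small error; iterating brings the rate down to `s / (1 - δ)`, and then `δ → 0`.
-/

open scoped Finset RightActions

/-! ### Almost disjoint translates -/

section Translates

lemma exists_almostDisjoint_subfamily {α ι κ : Type*} [DecidableEq α] [LinearOrder κ]
    (E : ι → Finset α) (rank : ι → κ) {δ : ℝ} (hδ : δ ≤ 1) (A : Finset ι) :
    ∃ T ⊆ A, (1 - δ) * ∑ i ∈ T, (#(E i) : ℝ) ≤ #(T.biUnion E) ∧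
      ∀ i ∈ A, δ * #(E i) ≤ #(E i ∩ (T.filter fun j => rank i ≤ rank j).biUnion E) := by
  classical
  -- Go through the indices in order of decreasing rank, keeping those not yet `δ`-covered.
  induction A using Finset.induction_on_min_value rank with
  | empty => exact ⟨∅, by simp, by simp, by simp⟩
  | insert a A ha hmin ih =>
    obtain ⟨T, hTA, hdisj, hcov⟩ := ih
    have hfilter : T.filter (fun j => rank a ≤ rank j) = T :=
      Finset.filter_true_of_mem fun j hj => hmin j (hTA hj)
    by_cases h : δ * #(E a) ≤ #(E a ∩ T.biUnion E)
    · refine ⟨T, hTA.trans (Finset.subset_insert a A), hdisj, fun i hi => ?_⟩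
      obtain rfl | hi := Finset.mem_insert.1 hi
      exacts [by rwa [hfilter], hcov i hi]
    · have haT : a ∉ T := fun haT => ha (hTA haT)
      refine ⟨insert a T, Finset.insert_subset_insert a hTA, ?_, fun i hi => ?_⟩
      · rw [Finset.sum_insert haT, Finset.biUnion_insert]
        have hcard : (#(E a ∪ T.biUnion E) : ℝ) + #(E a ∩ T.biUnion E) =
            #(E a) + #(T.biUnion E) := mod_cast Finset.card_union_add_card_inter _ _
        linarith
      · obtain rfl | hi := Finset.mem_insert.1 hi
        · rw [Finset.inter_eq_left.2 (Finset.subset_biUnion_of_mem E (by simp))]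
          exact mul_le_of_le_one_left (Nat.cast_nonneg _) hδ
        · refine (hcov i hi).trans ?_
          gcongr
          exact Finset.subset_insert a T

variable [Group G] [DecidableEq G]

lemma mem_op_smul_finset {E : Finset G} {c g : G} : g ∈ E <• c ↔ g * c⁻¹ ∈ E := by
  rw [← Finset.inv_smul_mem_iff, ← MulOpposite.op_inv, op_smul_eq_mul]

lemma sum_card_op_smul_inter_le (E B A : Finset G) : ∑ c ∈ A, #((E <• c) ∩ B) ≤ #E * #B := by
  calc ∑ c ∈ A, #((E <• c) ∩ B) = ∑ c ∈ A, #(B.filter fun b => b * c⁻¹ ∈ E) := by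
        refine Finset.sum_congr rfl fun c _ => congrArg Finset.card ?_
        ext b
        rw [Finset.mem_inter, mem_op_smul_finset, Finset.mem_filter, and_comm]
    _ = ∑ b ∈ B, #(A.filter fun c => b * c⁻¹ ∈ E) :=
        Finset.sum_card_bipartiteAbove_eq_sum_card_bipartiteBelow fun c b => b * c⁻¹ ∈ E
    _ ≤ ∑ _b ∈ B, #E := by
        refine Finset.sum_le_sum fun b _ => ?_
        exact Finset.card_le_card_of_injOn (fun c => b * c⁻¹)
          (fun c hc => (Finset.mem_filter.1 hc).2) fun c _ c' _ h => by simpa using h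
    _ = #E * #B := by rw [Finset.sum_const, smul_eq_mul, mul_comm]

/-- The family `E` of finite subsets of `G` has the `(δ, γ)`-selection property if, whenever every
point `c` of a finite set `A` is given a tile `E (p c) * c`, some of these tiles have overlaps of
proportion at most `δ` and their union has at least `γ * |A|` elements. This is how temperedness
enters the proof. -/
def HasTileSelection {ι : Type*} (E : ι → Finset G) (δ γ : ℝ) : Prop :=
  ∀ (A : Finset G) (p : G → ι), (∀ c ∈ A, (E (p c)).Nonempty) → ∃ T ⊆ A,
    (1 - δ) * ∑ c ∈ T, (#(E (p c)) : ℝ) ≤ #(T.biUnion fun c => E (p c) <• c) ∧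
    γ * #A ≤ #(T.biUnion fun c => E (p c) <• c)

lemma HasTileSelection.comp {ι κ : Type*} {E : ι → Finset G} {δ γ : ℝ}
    (h : HasTileSelection E δ γ) (f : κ → ι) : HasTileSelection (E ∘ f) δ γ :=
  fun A p => h A (f ∘ p)

lemma card_le_of_overlap_larger_index {F : ℕ → Finset G} {C : ℝ}
    (hC : ∀ n, (#((Finset.range n).biUnion fun k => (F k)⁻¹ * F n) : ℝ) ≤ C * #(F n))
    {A T : Finset G} {n : G → ℕ}
    (hA : ∀ c ∈ A, ∃ c' ∈ T, n c < n c' ∧ ¬Disjoint (F (n c) <• c) (F (n c') <• c')) :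
    (#A : ℝ) ≤ C * ∑ c ∈ T, (#(F (n c)) : ℝ) := by
  set U : ℕ → Finset G := fun m => (Finset.range m).biUnion fun k => (F k)⁻¹ * F m
  have hsub : A ⊆ T.biUnion fun c' => U (n c') <• c' := by
    intro c hc
    obtain ⟨c', hc', hlt, hmeet⟩ := hA c hc
    obtain ⟨g, hg, hg'⟩ := Finset.not_disjoint_iff.1 hmeet
    rw [mem_op_smul_finset] at hg hg'
    refine Finset.mem_biUnion.2 ⟨c', hc', mem_op_smul_finset.2 ?_⟩
    refine Finset.mem_biUnion.2 ⟨n c, Finset.mem_range.2 hlt, ?_⟩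
    have hfactor : c * c'⁻¹ = (g * c⁻¹)⁻¹ * (g * c'⁻¹) := by group
    exact hfactor ▸ Finset.mul_mem_mul (Finset.inv_mem_inv hg) hg'
  calc (#A : ℝ) ≤ ∑ c' ∈ T, (#(U (n c') <• c') : ℝ) :=
        mod_cast (Finset.card_le_card hsub).trans Finset.card_biUnion_le
    _ ≤ ∑ c' ∈ T, C * #(F (n c')) := by
        refine Finset.sum_le_sum fun c' _ => ?_
        rw [Finset.card_smul_finset]
        exact hC (n c')
    _ = C * ∑ c' ∈ T, (#(F (n c')) : ℝ) := (Finset.mul_sum ..).symm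

lemma mul_card_le_of_overlap_same_index {ι : Type*} [DecidableEq ι] {E : ι → Finset G} {δ : ℝ}
    {A T : Finset G} {p : G → ι} (hne : ∀ c ∈ A, (E (p c)).Nonempty)
    (hA : ∀ c ∈ A, δ * #(E (p c)) ≤
      ∑ c' ∈ T with p c' = p c, (#((E (p c) <• c) ∩ (E (p c') <• c')) : ℝ)) :
    δ * #A ≤ ∑ c ∈ T, (#(E (p c)) : ℝ) := by
  have hpoint : ∀ c ∈ A, δ ≤
      ∑ c' ∈ T, (#((E (p c') <• c) ∩ (E (p c') <• c')) : ℝ) / #(E (p c')) := by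
    intro c hc
    have hpos : (0 : ℝ) < #(E (p c)) := mod_cast (hne c hc).card_pos
    calc δ ≤ (∑ c' ∈ T with p c' = p c, (#((E (p c) <• c) ∩ (E (p c') <• c')) : ℝ)) /
          #(E (p c)) := (le_div_iff₀ hpos).2 (hA c hc)
      _ = ∑ c' ∈ T with p c' = p c,
          (#((E (p c') <• c) ∩ (E (p c') <• c')) : ℝ) / #(E (p c')) := by
        rw [Finset.sum_div]
        exact Finset.sum_congr rfl fun c' hc' => by rw [(Finset.mem_filter.1 hc').2]
      _ ≤ _ := Finset.sum_le_sum_of_subset_of_nonneg (Finset.filter_subset _ _)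
        fun _ _ _ => by positivity
  calc δ * #A = ∑ _c ∈ A, δ := by rw [Finset.sum_const, nsmul_eq_mul, mul_comm]
    _ ≤ ∑ c ∈ A, ∑ c' ∈ T, (#((E (p c') <• c) ∩ (E (p c') <• c')) : ℝ) / #(E (p c')) :=
        Finset.sum_le_sum hpoint
    _ = ∑ c' ∈ T, (∑ c ∈ A, (#((E (p c') <• c) ∩ (E (p c') <• c')) : ℝ)) / #(E (p c')) := by
        simp only [Finset.sum_div]
        exact Finset.sum_comm
    _ ≤ ∑ c' ∈ T, (#(E (p c')) : ℝ) := by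
        refine Finset.sum_le_sum fun c' _ =>
          div_le_of_le_mul₀ (Nat.cast_nonneg _) (Nat.cast_nonneg _) ?_
        have hcount := sum_card_op_smul_inter_le (E (p c')) (E (p c') <• c') A
        rw [Finset.card_smul_finset] at hcount
        exact_mod_cast hcount

lemma IsTemperedSeq.exists_card_biUnion_le {F : ℕ → Finset G} (hF : IsTemperedSeq F) :
    ∃ C : ℝ, 0 < C ∧
      ∀ n, (#((Finset.range n).biUnion fun k => (F k)⁻¹ * F n) : ℝ) ≤ C * #(F n) := by
  obtain ⟨C, hC0, hC⟩ := hF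
  refine ⟨C, hC0, fun n => ?_⟩
  rw [← Set.ncard_coe_finset]
  simpa only [Finset.coe_biUnion, Finset.coe_mul, Finset.coe_inv, Finset.mem_coe] using hC n

lemma card_le_of_almostDisjoint_selection {F : ℕ → Finset G} {C δ : ℝ} (hδ : 0 < δ)
    (hC : ∀ n, (#((Finset.range n).biUnion fun k => (F k)⁻¹ * F n) : ℝ) ≤ C * #(F n))
    {A T : Finset G} {n : G → ℕ} (hne : ∀ c ∈ A, (F (n c)).Nonempty)
    (hcov : ∀ c ∈ A, δ * #(F (n c)) ≤
      #((F (n c) <• c) ∩ (T.filter fun c' => n c ≤ n c').biUnion fun c' => F (n c') <• c')) :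
    (#A : ℝ) ≤ (C + 1 / δ) * ∑ c ∈ T, (#(F (n c)) : ℝ) := by
  classical
  let MeetsLarger (c : G) : Prop :=
    ∃ c' ∈ T, n c < n c' ∧ ¬Disjoint (F (n c) <• c) (F (n c') <• c')
  have hlarger : (#(A.filter MeetsLarger) : ℝ) ≤ C * ∑ c ∈ T, (#(F (n c)) : ℝ) :=
    card_le_of_overlap_larger_index hC fun c hc => (Finset.mem_filter.1 hc).2
  have hsame : δ * #(A.filter fun c => ¬MeetsLarger c) ≤ ∑ c ∈ T, (#(F (n c)) : ℝ) := by
    refine mul_card_le_of_overlap_same_index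
      (fun c hc => hne c (Finset.mem_filter.1 hc).1) fun c hc => ?_
    obtain ⟨hcA, hc⟩ := Finset.mem_filter.1 hc
    refine (hcov c hcA).trans ?_
    have hsub : (F (n c) <• c) ∩
        (T.filter fun c' => n c ≤ n c').biUnion (fun c' => F (n c') <• c') ⊆
        (T.filter fun c' => n c' = n c).biUnion
          fun c' => (F (n c) <• c) ∩ (F (n c') <• c') := by
      intro g hg
      obtain ⟨hgc, hg⟩ := Finset.mem_inter.1 hg
      obtain ⟨c', hc', hgc'⟩ := Finset.mem_biUnion.1 hg
      obtain ⟨hc'T, hle⟩ := Finset.mem_filter.1 hc'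
      have heq : n c' = n c := by
        by_contra hneq
        exact hc ⟨c', hc'T, lt_of_le_of_ne hle (Ne.symm hneq),
          Finset.not_disjoint_iff.2 ⟨g, hgc, hgc'⟩⟩
      exact Finset.mem_biUnion.2
        ⟨c', Finset.mem_filter.2 ⟨hc'T, heq⟩, Finset.mem_inter.2 ⟨hgc, hgc'⟩⟩
    exact_mod_cast (Finset.card_le_card hsub).trans Finset.card_biUnion_le
  calc (#A : ℝ) = #(A.filter MeetsLarger) + #(A.filter fun c => ¬MeetsLarger c) :=
        mod_cast (Finset.card_filter_add_card_filter_not (s := A) MeetsLarger).symm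
    _ ≤ C * ∑ c ∈ T, (#(F (n c)) : ℝ) + 1 / δ * ∑ c ∈ T, (#(F (n c)) : ℝ) := by
        gcongr
        rwa [one_div, ← div_eq_inv_mul, le_div_iff₀' hδ]
    _ = (C + 1 / δ) * ∑ c ∈ T, (#(F (n c)) : ℝ) := (add_mul ..).symm

lemma IsTemperedSeq.exists_hasTileSelection {F : ℕ → Finset G} (hF : IsTemperedSeq F) {δ : ℝ}
    (hδ : 0 < δ) (hδ1 : δ < 1) : ∃ γ, 0 < γ ∧ HasTileSelection F δ γ := by
  obtain ⟨C, hC0, hC⟩ := hF.exists_card_biUnion_le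
  have hden : 0 < C + 1 / δ := by positivity
  have hδ' : 0 < 1 - δ := sub_pos.2 hδ1
  refine ⟨(1 - δ) / (C + 1 / δ), div_pos hδ' hden, fun A n hne => ?_⟩
  obtain ⟨T, hTA, hdisj, hcov⟩ :=
    exists_almostDisjoint_subfamily (fun c => F (n c) <• c) n hδ1.le A
  simp only [Finset.card_smul_finset] at hdisj hcov
  refine ⟨T, hTA, hdisj, le_trans ?_ hdisj⟩
  rw [div_mul_eq_mul_div, div_le_iff₀ hden, mul_assoc, mul_comm (∑ c ∈ T, _)]
  gcongr
  exact card_le_of_almostDisjoint_selection hδ hC hne hcov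

end Translates

/-! ### Boundaries and Følner sequences -/

section Boundary

variable [Group G] [DecidableEq G]

/-- The inner boundary of `E` relative to `K`: the points of `E` that some left translation by an
element of `K` moves out of `E`. -/
def innerBoundary (K E : Finset G) : Finset G := E.filter fun g => ∃ k ∈ K, k * g ∉ E

lemma mem_innerBoundary {K E : Finset G} {g : G} :
    g ∈ innerBoundary K E ↔ g ∈ E ∧ ∃ k ∈ K, k * g ∉ E := Finset.mem_filter

lemma innerBoundary_subset (K E : Finset G) : innerBoundary K E ⊆ E := Finset.filter_subset _ _

lemma innerBoundary_mono {K K' : Finset G} (h : K ⊆ K') (E : Finset G) :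
    innerBoundary K E ⊆ innerBoundary K' E :=
  Finset.monotone_filter_right E fun _ _ ⟨k, hk, hkg⟩ => ⟨k, h hk, hkg⟩

lemma op_smul_innerBoundary (K E : Finset G) (c : G) :
    innerBoundary K E <• c = innerBoundary K (E <• c) := by
  ext g
  simp only [mem_op_smul_finset, mem_innerBoundary, mul_assoc]

lemma innerBoundary_sdiff_biUnion_subset {ι : Type*} (K D : Finset G) (Q : Finset ι)
    (E : ι → Finset G) : innerBoundary K (D \ Q.biUnion E) ⊆
      innerBoundary K D ∪ Q.biUnion fun q => K⁻¹ * innerBoundary K⁻¹ (E q) := by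
  intro g hg
  obtain ⟨hg, k, hk, hkg⟩ := mem_innerBoundary.1 hg
  obtain ⟨hgD, hgQ⟩ := Finset.mem_sdiff.1 hg
  by_cases hkD : k * g ∈ D
  · have hkQ : k * g ∈ Q.biUnion E := by
      by_contra hkQ
      exact hkg (Finset.mem_sdiff.2 ⟨hkD, hkQ⟩)
    obtain ⟨q, hq, hkq⟩ := Finset.mem_biUnion.1 hkQ
    have hgq : g ∉ E q := fun hgq => hgQ (Finset.mem_biUnion.2 ⟨q, hq, hgq⟩)
    have hk' := Finset.inv_mem_inv hk
    refine Finset.mem_union_right _ (Finset.mem_biUnion.2 ⟨q, hq, ?_⟩)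
    rw [← inv_mul_cancel_left k g]
    exact Finset.mul_mem_mul hk' (mem_innerBoundary.2 ⟨hkq, k⁻¹, hk', by simpa using hgq⟩)
  · exact Finset.mem_union_left _ (mem_innerBoundary.2 ⟨hgD, k, hk, hkD⟩)

lemma card_innerBoundary_sdiff_biUnion_le {ι : Type*} (K D : Finset G) (Q : Finset ι)
    (E : ι → Finset G) : #(innerBoundary K (D \ Q.biUnion E)) ≤
      #(innerBoundary K D) + ∑ q ∈ Q, #K * #(innerBoundary K⁻¹ (E q)) := by
  refine (Finset.card_le_card (innerBoundary_sdiff_biUnion_subset K D Q E)).trans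
    ((Finset.card_union_le _ _).trans ?_)
  gcongr
  refine Finset.card_biUnion_le.trans (Finset.sum_le_sum fun q _ => ?_)
  simpa only [Finset.card_inv] using Finset.card_mul_le (s := K⁻¹) (t := innerBoundary K⁻¹ (E q))

lemma card_innerBoundary_le_sum_ncard_symmDiff (K E : Finset G) :
    #(innerBoundary K E) ≤
      ∑ k ∈ K, (symmDiff (E : Set G) ((k⁻¹ * ·) '' (E : Set G))).ncard := by
  have hsub : innerBoundary K E ⊆ K.biUnion fun k => E.filter fun g => k * g ∉ E := by
    intro g hg
    obtain ⟨hg, k, hk, hkg⟩ := mem_innerBoundary.1 hg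
    exact Finset.mem_biUnion.2 ⟨k, hk, Finset.mem_filter.2 ⟨hg, hkg⟩⟩
  refine (Finset.card_le_card hsub).trans (Finset.card_biUnion_le.trans ?_)
  refine Finset.sum_le_sum fun k _ => ?_
  rw [← Set.ncard_coe_finset]
  refine Set.ncard_le_ncard (fun g hg => Or.inl ?_)
    ((E.finite_toSet.union (E.finite_toSet.image _)).subset symmDiff_le_sup)
  obtain ⟨hg, hkg⟩ := Finset.mem_filter.1 (Finset.mem_coe.1 hg)
  refine ⟨hg, ?_⟩
  rintro ⟨h, hh, rfl⟩
  exact hkg (by simpa using hh)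

lemma IsFolnerSeq.tendsto_card_innerBoundary_div {F : ℕ → Finset G} (hF : IsFolnerSeq F)
    (K : Finset G) :
    Tendsto (fun n => (#(innerBoundary K (F n)) : ℝ) / #(F n)) atTop (𝓝 0) := by
  have hsum : Tendsto (fun n => ∑ k ∈ K,
      ((symmDiff (F n : Set G) ((k⁻¹ * ·) '' (F n : Set G))).ncard : ℝ) / #(F n)) atTop (𝓝 0) := by
    simpa only [Finset.sum_const_zero] using tendsto_finsetSum K fun k _ => hF k⁻¹
  refine squeeze_zero (fun n => by positivity) (fun n => ?_) hsum
  rw [← Finset.sum_div]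
  gcongr
  exact_mod_cast card_innerBoundary_le_sum_ncard_symmDiff K (F n)

lemma IsFolnerSeq.eventually_mul_card_innerBoundary_le {F : ℕ → Finset G} (hF : IsFolnerSeq F)
    (K : Finset G) (a : ℝ) {κ : ℝ} (hκ : 0 < κ) :
    ∀ᶠ n in atTop, a * #(innerBoundary K (F n)) ≤ κ * #(F n) := by
  have hlim := (hF.tendsto_card_innerBoundary_div K).const_mul a
  rw [mul_zero] at hlim
  filter_upwards [hlim.eventually_lt_const hκ] with n hn
  obtain hempty | hne := (F n).eq_empty_or_nonempty
  · simp [hempty, innerBoundary]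
  · rw [← mul_div_assoc, div_lt_iff₀ (mod_cast hne.card_pos)] at hn
    exact hn.le

end Boundary

/-! ### Patterns of tiles -/

section Tilings

variable [Group G] [DecidableEq G] {ι : Type*}

/-- The union of the tiles `E i * c` over the pairs `(c, i)` of a pattern `Q`. -/
def tileUnion (E : ι → Finset G) (Q : Finset (G × ι)) : Finset G :=
  Q.biUnion fun q => E q.2 <• q.1

open Classical in
/-- The patterns of tiles with shapes in `I` and centres in `D` that stay inside `D`, overlap in
proportion at most `δ`, and cover at least `m` points. -/
noncomputable def tilings (E : ι → Finset G) (I : Finset ι) (D : Finset G) (δ m : ℝ) :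
    Finset (Finset (G × ι)) :=
  (D ×ˢ I).powerset.filter fun Q => tileUnion E Q ⊆ D ∧
    (1 - δ) * ∑ q ∈ Q, (#(E q.2) : ℝ) ≤ #(tileUnion E Q) ∧ m ≤ #(tileUnion E Q)

lemma mem_tilings {E : ι → Finset G} {I : Finset ι} {D : Finset G} {δ m : ℝ}
    {Q : Finset (G × ι)} : Q ∈ tilings E I D δ m ↔ Q ⊆ D ×ˢ I ∧ tileUnion E Q ⊆ D ∧
      (1 - δ) * ∑ q ∈ Q, (#(E q.2) : ℝ) ≤ #(tileUnion E Q) ∧ m ≤ #(tileUnion E Q) := by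
  rw [tilings, Finset.mem_filter, Finset.mem_powerset]

lemma op_smul_subset_of_notMem_innerBoundary {E K D : Finset G} (hE : E ⊆ K) {c : G} (hc : c ∈ D)
    (hcK : c ∉ innerBoundary K D) : E <• c ⊆ D := by
  intro g hg
  by_contra hgD
  exact hcK (mem_innerBoundary.2
    ⟨hc, g * c⁻¹, hE (mem_op_smul_finset.1 hg), by simpa using hgD⟩)

lemma HasTileSelection.exists_mem_tilings {E : ι → Finset G} {δ γ : ℝ}
    (h : HasTileSelection E δ γ) {I : Finset ι} (hne : ∀ i ∈ I, (E i).Nonempty) {K : Finset G}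
    (hK : ∀ i ∈ I, E i ⊆ K) (D : Finset G) {p : G → ι} (hp : ∀ c, p c ∈ I) :
    ∃ Q ∈ tilings E I D δ (γ * (#D - #(innerBoundary K D))), ∀ q ∈ Q, q.2 = p q.1 := by
  classical
  obtain ⟨T, hTD, hdisj, hcov⟩ := h (D \ innerBoundary K D) p fun c _ => hne _ (hp c)
  have hunion : tileUnion E (T.image fun c => (c, p c)) = T.biUnion fun c => E (p c) <• c :=
    Finset.image_biUnion
  refine ⟨T.image fun c => (c, p c), mem_tilings.2 ⟨?_, ?_, ?_, ?_⟩, ?_⟩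
  · intro q hq
    obtain ⟨c, hc, rfl⟩ := Finset.mem_image.1 hq
    exact Finset.mem_product.2 ⟨(Finset.mem_sdiff.1 (hTD hc)).1, hp c⟩
  · rw [hunion]
    refine Finset.biUnion_subset.2 fun c hc => ?_
    obtain ⟨hcD, hcK⟩ := Finset.mem_sdiff.1 (hTD hc)
    exact op_smul_subset_of_notMem_innerBoundary (hK _ (hp c)) hcD hcK
  · rwa [hunion, Finset.sum_image fun a _ b _ hab => congrArg Prod.fst hab]
  · rwa [hunion, ← Nat.cast_sub (Finset.card_le_card (innerBoundary_subset K D)),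
      ← Finset.card_sdiff_of_subset (innerBoundary_subset K D)]
  · intro q hq
    obtain ⟨c, _, rfl⟩ := Finset.mem_image.1 hq
    rfl

lemma sum_tilings_prod_le (E : ι → Finset G) (I : Finset ι) (D : Finset G) (δ m : ℝ) {w : ι → ℝ}
    (hw : ∀ i, 0 ≤ w i) :
    ∑ Q ∈ tilings E I D δ m, ∏ q ∈ Q, w q.2 ≤ Real.exp (#D * ∑ i ∈ I, w i) := by
  calc ∑ Q ∈ tilings E I D δ m, ∏ q ∈ Q, w q.2
      ≤ ∑ Q ∈ (D ×ˢ I).powerset, ∏ q ∈ Q, w q.2 :=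
        Finset.sum_le_sum_of_subset_of_nonneg (Finset.filter_subset _ _)
          fun _ _ _ => Finset.prod_nonneg fun q _ => hw q.2
    _ = ∏ q ∈ D ×ˢ I, (1 + w q.2) := (Finset.prod_one_add _).symm
    _ ≤ Real.exp (∑ q ∈ D ×ˢ I, w q.2) := Real.prod_one_add_le_exp_sum _ fun q => hw q.2
    _ = Real.exp (#D * ∑ i ∈ I, w i) := by
        rw [Finset.sum_product]
        simp only [Finset.sum_const, nsmul_eq_mul]

lemma card_innerBoundary_sdiff_tileUnion_le (K D : Finset G) (E : ι → Finset G)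
    (Q : Finset (G × ι)) : #(innerBoundary K (D \ tileUnion E Q)) ≤
      #(innerBoundary K D) + ∑ q ∈ Q, #K * #(innerBoundary K⁻¹ (E q.2)) := by
  simpa only [tileUnion, ← op_smul_innerBoundary, Finset.card_smul_finset] using
    card_innerBoundary_sdiff_biUnion_le K D Q fun q => E q.2 <• q.1

end Tilings

/-! ### Covering numbers -/

section CoverNum

variable [Group G] [MulAction G X]

/-- `Λ` is a subcover of the refined cover `⋁_{g∈F} g⁻¹𝒰`, whose members are indexed by functions
`u` with `u g ∈ 𝒰` for `g ∈ F`, as in `coverNum`. -/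
def IsCylinderCover (𝒰 : Finset (Set X)) (F : Finset G) (Λ : Finset (G → Set X)) : Prop :=
  (∀ u ∈ Λ, ∀ g ∈ F, u g ∈ 𝒰) ∧ ∀ x : X, ∃ u ∈ Λ, ∀ g ∈ F, g • x ∈ u g

lemma coverNum_eq_sInf (𝒰 : Finset (Set X)) (F : Finset G) :
    coverNum 𝒰 F = sInf {k | ∃ Λ, #Λ = k ∧ IsCylinderCover 𝒰 F Λ} := by
  simp only [coverNum, IsCylinderCover, Set.eq_univ_iff_forall, Set.mem_iUnion, Set.mem_iInter,
    Set.mem_preimage, exists_prop]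

lemma IsCylinderCover.coverNum_le {𝒰 : Finset (Set X)} {F : Finset G} {Λ : Finset (G → Set X)}
    (h : IsCylinderCover 𝒰 F Λ) : coverNum 𝒰 F ≤ #Λ := by
  rw [coverNum_eq_sInf]
  exact Nat.sInf_le ⟨Λ, rfl, h⟩

lemma exists_isCylinderCover_card_le_pow {𝒰 : Finset (Set X)}
    (hU : ⋃₀ (𝒰 : Set (Set X)) = Set.univ) (F : Finset G) :
    ∃ Λ, IsCylinderCover 𝒰 F Λ ∧ #Λ ≤ #𝒰 ^ #F := by
  classical
  choose U hU𝒰 hxU using Set.sUnion_eq_univ_iff.1 hU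
  refine ⟨(Fintype.piFinset fun _ : F => 𝒰).image
    fun v g => if hg : g ∈ F then v ⟨g, hg⟩ else ∅, ⟨?_, fun x => ?_⟩, ?_⟩
  · intro u hu g hg
    obtain ⟨v, hv, rfl⟩ := Finset.mem_image.1 hu
    simpa only [dif_pos hg] using Fintype.mem_piFinset.1 hv ⟨g, hg⟩
  · refine ⟨_, Finset.mem_image_of_mem _ (Fintype.mem_piFinset.2 fun g : F =>
      hU𝒰 ((g : G) • x)), fun g hg => ?_⟩
    simpa only [dif_pos hg] using hxU (g • x)
  · exact Finset.card_image_le.trans (by simp)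

lemma exists_isCylinderCover_card_eq_coverNum {𝒰 : Finset (Set X)}
    (hU : ⋃₀ (𝒰 : Set (Set X)) = Set.univ) (F : Finset G) :
    ∃ Λ, IsCylinderCover 𝒰 F Λ ∧ #Λ = coverNum 𝒰 F := by
  obtain ⟨Λ₀, hΛ₀, -⟩ := exists_isCylinderCover_card_le_pow hU F
  have hmem := Nat.sInf_mem (s := {k | ∃ Λ, #Λ = k ∧ IsCylinderCover 𝒰 F Λ}) ⟨_, Λ₀, rfl, hΛ₀⟩
  rw [← coverNum_eq_sInf] at hmem
  exact hmem.imp fun Λ hΛ => hΛ.symm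

lemma coverNum_le_exp {𝒰 : Finset (Set X)} (hU : ⋃₀ (𝒰 : Set (Set X)) = Set.univ)
    (F : Finset G) : (coverNum 𝒰 F : ℝ) ≤ Real.exp (#𝒰 * #F) := by
  obtain ⟨Λ, hΛ, hcard⟩ := exists_isCylinderCover_card_le_pow hU F
  calc (coverNum 𝒰 F : ℝ) ≤ (#𝒰 : ℝ) ^ #F := mod_cast hΛ.coverNum_le.trans hcard
    _ ≤ Real.exp #𝒰 ^ #F := by
        gcongr
        linarith [Real.add_one_le_exp (#𝒰 : ℝ)]
    _ = Real.exp (#𝒰 * #F) := by rw [mul_comm, Real.exp_nat_mul]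

lemma log_coverNum_le {𝒰 : Finset (Set X)} {F : Finset G} {y : ℝ} (hy : 0 ≤ y)
    (h : (coverNum 𝒰 F : ℝ) ≤ Real.exp y) : Real.log (coverNum 𝒰 F) ≤ y := by
  obtain h0 | hpos := Nat.eq_zero_or_pos (coverNum 𝒰 F)
  · simpa [h0] using hy
  · exact (Real.log_le_iff_le_exp (mod_cast hpos)).2 h

lemma isBoundedUnder_log_coverNum_div (F : ℕ → Finset G) {𝒰 : Finset (Set X)}
    (hU : ⋃₀ (𝒰 : Set (Set X)) = Set.univ) :
    IsBoundedUnder (· ≤ ·) atTop fun n => Real.log (coverNum 𝒰 (F n)) / #(F n) :=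
  isBoundedUnder_of ⟨#𝒰, fun n => div_le_of_le_mul₀ (Nat.cast_nonneg _) (Nat.cast_nonneg _)
    (log_coverNum_le (by positivity) (coverNum_le_exp hU (F n)))⟩

lemma coverNum_le_sum_sdiff [DecidableEq G] {ι : Type*} {𝒰 : Finset (Set X)}
    (hU : ⋃₀ (𝒰 : Set (Set X)) = Set.univ) (D : Finset G) (S : Finset ι) {V : ι → Finset G}
    {Z : ι → Set X} (hZ : ∀ x, ∃ q ∈ S, x ∈ Z q)
    (hV : ∀ q ∈ S, ∀ g ∈ V q, ∃ U ∈ 𝒰, MapsTo (g • ·) (Z q) U) :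
    coverNum 𝒰 D ≤ ∑ q ∈ S, coverNum 𝒰 (D \ V q) := by
  classical
  choose! u hu𝒰 hZu using hV
  choose Λ hΛ hΛcard using fun E : Finset G => exists_isCylinderCover_card_eq_coverNum hU E
  have hcover : IsCylinderCover 𝒰 D (S.biUnion fun q =>
      (Λ (D \ V q)).image fun v g => if g ∈ V q then u q g else v g) := by
    refine ⟨fun w hw g hg => ?_, fun x => ?_⟩
    · obtain ⟨q, hq, hw⟩ := Finset.mem_biUnion.1 hw
      obtain ⟨v, hv, rfl⟩ := Finset.mem_image.1 hw
      by_cases hgV : g ∈ V q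
      · simpa only [if_pos hgV] using hu𝒰 q hq g hgV
      · simpa only [if_neg hgV] using (hΛ _).1 v hv g (Finset.mem_sdiff.2 ⟨hg, hgV⟩)
    · obtain ⟨q, hq, hxq⟩ := hZ x
      obtain ⟨v, hv, hxv⟩ := (hΛ (D \ V q)).2 x
      refine ⟨_, Finset.mem_biUnion.2 ⟨q, hq, Finset.mem_image_of_mem _ hv⟩, fun g hg => ?_⟩
      by_cases hgV : g ∈ V q
      · simpa only [if_pos hgV] using hZu q hq g hgV hxq
      · simpa only [if_neg hgV] using hxv g (Finset.mem_sdiff.2 ⟨hg, hgV⟩)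
  refine hcover.coverNum_le.trans (Finset.card_biUnion_le.trans (Finset.sum_le_sum fun q _ => ?_))
  exact Finset.card_image_le.trans (hΛcard _).le

end CoverNum

/-! ### Exponential rates of covering numbers -/

section CoverRate

variable [Group G] [MulAction G X] [DecidableEq G]

variable (G) in
/-- The covering numbers of `𝒰` grow exponentially at rate at most `t`. The bound is required of all
finite sets, with a boundary term, and not only along a Følner sequence: it will be applied to what
remains of a set after some tiles have been removed. -/
def HasCoverRate (𝒰 : Finset (Set X)) (t : ℝ) : Prop :=
  ∃ (K : Finset G) (A : ℝ), 0 ≤ A ∧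
    ∀ E : Finset G, (coverNum 𝒰 E : ℝ) ≤ Real.exp (t * #E + A * #(innerBoundary K E))

lemma isUpperSet_setOf_hasCoverRate (𝒰 : Finset (Set X)) :
    IsUpperSet {t | HasCoverRate G 𝒰 t} := by
  rintro t t' htt' ⟨K, A, hA, h⟩
  refine ⟨K, A, hA, fun E => (h E).trans ?_⟩
  gcongr

lemma hasCoverRate_card {𝒰 : Finset (Set X)} (hU : ⋃₀ (𝒰 : Set (Set X)) = Set.univ) :
    HasCoverRate G 𝒰 #𝒰 :=
  ⟨∅, 0, le_rfl, fun E => by simpa using coverNum_le_exp hU E⟩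

lemma HasCoverRate.coverTopEnt_le {F : ℕ → Finset G} {𝒰 : Finset (Set X)} {t : ℝ}
    (h : HasCoverRate G 𝒰 t) (hF : IsFolnerSeq F) (hne : ∀ᶠ n in atTop, (F n).Nonempty)
    (ht : 0 ≤ t) : coverTopEnt F 𝒰 ≤ t := by
  obtain ⟨K, A, hA, h⟩ := h
  have hlim : Tendsto (fun n => t + A * (#(innerBoundary K (F n)) / #(F n) : ℝ)) atTop (𝓝 t) := by
    simpa using ((hF.tendsto_card_innerBoundary_div K).const_mul A).const_add t
  have hle : ∀ᶠ n in atTop, Real.log (coverNum 𝒰 (F n)) / #(F n) ≤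
      t + A * (#(innerBoundary K (F n)) / #(F n) : ℝ) := by
    filter_upwards [hne] with n hn
    have hpos : (0 : ℝ) < #(F n) := mod_cast hn.card_pos
    rw [div_le_iff₀ hpos, add_mul, mul_assoc, div_mul_cancel₀ _ hpos.ne']
    exact log_coverNum_le (by positivity) (h (F n))
  have hnonneg : ∀ n, 0 ≤ Real.log (coverNum 𝒰 (F n)) / #(F n) :=
    fun n => div_nonneg (Real.log_natCast_nonneg _) (Nat.cast_nonneg _)
  calc coverTopEnt F 𝒰 ≤ limsup (fun n => t + A * (#(innerBoundary K (F n)) / #(F n) : ℝ)) atTop :=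
        limsup_le_limsup hle
          (IsCoboundedUnder.of_frequently_ge (Eventually.of_forall hnonneg).frequently)
          hlim.isBoundedUnder_le
    _ = t := hlim.limsup_eq

lemma coverNum_sdiff_tileUnion_le {ι : Type*} {𝒰 : Finset (Set X)} {t A : ℝ} {K : Finset G}
    (hA : 0 ≤ A)
    (hrate : ∀ E : Finset G,
      (coverNum 𝒰 E : ℝ) ≤ Real.exp (t * #E + A * #(innerBoundary K E)))
    {E : ι → Finset G} {I : Finset ι} {D : Finset G} {δ m σ θ : ℝ} (hσ : 0 ≤ σ) (hσt : σ ≤ t)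
    (hθ : 0 ≤ θ)
    (hbdry : ∀ i ∈ I, A * #K * #(innerBoundary K⁻¹ (E i)) ≤ θ * (1 - δ) * #(E i))
    {Q : Finset (G × ι)} (hQ : Q ∈ tilings E I D δ m) :
    (coverNum 𝒰 (D \ tileUnion E Q) : ℝ) ≤
      Real.exp (t * #D - (t - σ) * m + A * #(innerBoundary K D) + θ * #D) *
        ∏ q ∈ Q, Real.exp (-((1 - δ) * σ) * #(E q.2)) := by
  obtain ⟨hQI, hVD, hdisj, hm⟩ := mem_tilings.1 hQ
  set V := tileUnion E Q
  have hVcard : (#V : ℝ) ≤ #D := mod_cast Finset.card_le_card hVD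
  have hsdiff : (#(D \ V) : ℝ) = #D - #V := by
    rw [Finset.card_sdiff_of_subset hVD, Nat.cast_sub (Finset.card_le_card hVD)]
  have hboundary : A * #(innerBoundary K (D \ V)) ≤ A * #(innerBoundary K D) + θ * #D := by
    calc A * #(innerBoundary K (D \ V))
        ≤ A * (#(innerBoundary K D) + ∑ q ∈ Q, #K * #(innerBoundary K⁻¹ (E q.2)) : ℝ) := by
          gcongr
          exact_mod_cast card_innerBoundary_sdiff_tileUnion_le K D E Q
      _ = A * #(innerBoundary K D) + ∑ q ∈ Q, A * #K * #(innerBoundary K⁻¹ (E q.2)) := by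
          push_cast
          simp only [mul_add, Finset.mul_sum, mul_assoc]
      _ ≤ A * #(innerBoundary K D) + ∑ q ∈ Q, θ * (1 - δ) * #(E q.2) := by
          refine add_le_add le_rfl (Finset.sum_le_sum fun q hq => ?_)
          exact hbdry q.2 (Finset.mem_product.1 (hQI hq)).2
      _ = A * #(innerBoundary K D) + θ * ((1 - δ) * ∑ q ∈ Q, (#(E q.2) : ℝ)) := by
          rw [← Finset.mul_sum, mul_assoc]
      _ ≤ A * #(innerBoundary K D) + θ * #D := by
          gcongr
          exact hdisj.trans hVcard
  refine (hrate _).trans ?_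
  rw [← Real.exp_sum, ← Real.exp_add, Real.exp_le_exp, ← Finset.mul_sum, hsdiff]
  linarith [mul_le_mul_of_nonneg_left hdisj hσ, mul_le_mul_of_nonneg_left hm (sub_nonneg.2 hσt)]

end CoverRate

/-! ### Bowen balls -/

section BowenBall

variable [Group G] [MetricSpace X] [MulAction G X]

lemma isOpen_bowenBall [ContinuousConstSMul G X] (F : Finset G) (x : X) (ε : ℝ) :
    IsOpen (bowenBall F x ε) := by
  have hball : bowenBall F x ε = ⋂ g ∈ F, {y : X | dist (g • x) (g • y) < ε} := by
    ext y
    simp [bowenBall]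
  rw [hball]
  exact isOpen_biInter_finset fun g _ =>
    isOpen_lt (continuous_const.dist (continuous_const_smul g)) continuous_const

lemma ballM_antitone (F : ℕ → Finset G) (Z : Set X) (N : ℕ) (ε : ℝ) :
    Antitone (ballM F Z N ε) := by
  intro s s' hs
  refine iInf₂_mono fun I _ => iInf₂_mono fun _ _ => ENNReal.tsum_le_tsum fun p => ?_
  gcongr

lemma ballMN_antitone (F : ℕ → Finset G) (Z : Set X) (ε : ℝ) : Antitone (ballMN F Z ε) :=
  fun _ _ hs => iSup_mono fun N => ballM_antitone F Z N ε hs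

lemma exists_finset_bowenBall_cover [CompactSpace X] [ContinuousConstSMul G X]
    {F : ℕ → Finset G} {ε s : ℝ} (h : ballMN F (Set.univ : Set X) ε s = 0) (N : ℕ) {η : ℝ}
    (hη : 0 < η) : ∃ I : Finset (X × ℕ), (∀ p ∈ I, N ≤ p.2) ∧
      (∀ x, ∃ p ∈ I, x ∈ bowenBall (F p.2) p.1 ε) ∧ ∑ p ∈ I, Real.exp (-s * #(F p.2)) ≤ η := by
  classical
  have hlt : ballM F (Set.univ : Set X) N ε s < ENNReal.ofReal η :=
    (ENNReal.iSup_eq_zero.1 h N).trans_lt (ENNReal.ofReal_pos.2 hη)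
  simp only [ballM, iInf_lt_iff] at hlt
  obtain ⟨I, -, hIN, hIcov, hIsum⟩ := hlt
  obtain ⟨J, hJI, hJfin, hJcov⟩ := isCompact_univ.elim_finite_subcover_image
    (fun p _ => isOpen_bowenBall _ _ _) hIcov
  lift J to Finset (X × ℕ) using hJfin
  refine ⟨J, fun p hp => hIN p (hJI hp), fun x => ?_, ?_⟩
  · simpa only [Set.mem_iUnion, Finset.mem_coe, exists_prop] using hJcov (Set.mem_univ x)
  · rw [← ENNReal.ofReal_le_ofReal_iff hη.le,
      ENNReal.ofReal_sum_of_nonneg fun _ _ => (Real.exp_pos _).le,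
      ← Finset.tsum_subtype' J fun p : X × ℕ => ENNReal.ofReal (Real.exp (-s * #(F p.2)))]
    exact (ENNReal.tsum_mono_subtype
      (fun p : X × ℕ => ENNReal.ofReal (Real.exp (-s * #(F p.2)))) hJI).trans hIsum.le

end BowenBall

/-! ### The lower bound for Bowen entropy -/

section LowerBound

lemma Ioi_subset_of_contracting {S : Set ℝ} {σ γ : ℝ} (hγ : 0 < γ) (hS : IsUpperSet S)
    (hne : S.Nonempty) (hstep : ∀ t ∈ S, σ ≤ t → Ioi (t - γ * (t - σ)) ⊆ S) : Ioi σ ⊆ S := by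
  set T := S ∩ Ici σ
  have hTne : T.Nonempty :=
    hne.imp' (max · σ) fun t ht => ⟨hS (le_max_left t σ) ht, le_max_right t σ⟩
  have hTbdd : BddBelow T := ⟨σ, fun t ht => ht.2⟩
  have hinf : sInf T ≤ σ := by
    by_contra! hlt
    have hgap : 0 < γ * (sInf T - σ) := mul_pos hγ (sub_pos.2 hlt)
    obtain ⟨t, ⟨htS, hσt⟩, ht⟩ := exists_lt_of_csInf_lt hTne (lt_add_of_pos_right (sInf T) hgap)
    have hinf_le : sInf T ≤ t := csInf_le hTbdd ⟨htS, hσt⟩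
    have hdrop : t - γ * (t - σ) < sInf T := by
      linarith [mul_le_mul_of_nonneg_left hinf_le hγ.le]
    obtain ⟨r, hr, hrinf⟩ := exists_between (max_lt hdrop hlt)
    obtain ⟨hr, hσr⟩ := max_lt_iff.1 hr
    exact hrinf.not_ge (csInf_le hTbdd ⟨hstep t htS hσt hr, hσr.le⟩)
  intro t ht
  obtain ⟨r, hr, hrt⟩ := exists_lt_of_csInf_lt hTne (hinf.trans_lt ht)
  exact hS hrt.le hr.1

variable [Group G] [MetricSpace X] [MulAction G X]

lemma coverNum_le_sum_tilings [DecidableEq G] {F : ℕ → Finset G} {𝒰 : Finset (Set X)} {ε δ γ : ℝ}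
    (hU : ⋃₀ (𝒰 : Set (Set X)) = Set.univ) (hleb : ∀ x, ∃ U ∈ 𝒰, Metric.ball x ε ⊆ U)
    (hsel : HasTileSelection F δ γ) {I : Finset (X × ℕ)} (hne : ∀ p ∈ I, (F p.2).Nonempty)
    (hcov : ∀ x, ∃ p ∈ I, x ∈ bowenBall (F p.2) p.1 ε) {K : Finset G}
    (hK : ∀ p ∈ I, F p.2 ⊆ K) (D : Finset G) :
    coverNum 𝒰 D ≤ ∑ Q ∈ tilings (F ∘ Prod.snd) I D δ (γ * (#D - #(innerBoundary K D))),
      coverNum 𝒰 (D \ tileUnion (F ∘ Prod.snd) Q) := by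
  choose p hpI hp using hcov
  refine coverNum_le_sum_sdiff hU D _
    (Z := fun Q => {x | ∀ q ∈ Q, q.1 • x ∈ bowenBall (F q.2.2) q.2.1 ε}) (fun x => ?_) ?_
  · obtain ⟨Q, hQ, hQp⟩ := (hsel.comp Prod.snd).exists_mem_tilings hne hK D
      (p := fun c => p (c • x)) fun c => hpI (c • x)
    refine ⟨Q, hQ, fun q hq => ?_⟩
    rw [hQp q hq]
    exact hp (q.1 • x)
  · intro Q _ g hg
    obtain ⟨q, hq, hgq⟩ := Finset.mem_biUnion.1 hg
    rw [mem_op_smul_finset] at hgq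
    obtain ⟨U, hU, hball⟩ := hleb ((g * q.1⁻¹) • q.2.1)
    refine ⟨U, hU, fun x hx => hball ?_⟩
    simpa only [Metric.mem_ball', smul_smul, inv_mul_cancel_right] using hx q hq _ hgq

lemma HasCoverRate.improve [DecidableEq G] [CompactSpace X] [ContinuousConstSMul G X]
    {F : ℕ → Finset G} {𝒰 : Finset (Set X)} {ε δ γ σ t t' : ℝ} (h : HasCoverRate G 𝒰 t)
    (hF : IsFolnerSeq F) (hne : ∀ᶠ n in atTop, (F n).Nonempty) (hsel : HasTileSelection F δ γ)
    (hγ : 0 ≤ γ) (hδ : δ < 1) (hU : ⋃₀ (𝒰 : Set (Set X)) = Set.univ)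
    (hleb : ∀ x, ∃ U ∈ 𝒰, Metric.ball x ε ⊆ U)
    (hM : ballMN F (Set.univ : Set X) ε ((1 - δ) * σ) = 0) (hσ : 0 ≤ σ) (hσt : σ ≤ t)
    (ht' : t - γ * (t - σ) < t') : HasCoverRate G 𝒰 t' := by
  obtain ⟨K, A, hA, hrate⟩ := h
  obtain ⟨θ, hθ, htθ⟩ : ∃ θ, 0 < θ ∧ t - γ * (t - σ) + 2 * θ = t' :=
    ⟨(t' - (t - γ * (t - σ))) / 2, by linarith, by ring⟩
  obtain ⟨N, hN⟩ := eventually_atTop.1 (hne.and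
    (hF.eventually_mul_card_innerBoundary_le K⁻¹ (A * #K) (mul_pos hθ (sub_pos.2 hδ))))
  set E : X × ℕ → Finset G := F ∘ Prod.snd
  set w : X × ℕ → ℝ := fun p => Real.exp (-((1 - δ) * σ) * #(E p))
  obtain ⟨I, hIN, hIcov, (hIsum : ∑ p ∈ I, w p ≤ θ)⟩ := exists_finset_bowenBall_cover hM N hθ
  set K' := K ∪ I.biUnion E
  have hIK : ∀ p ∈ I, E p ⊆ K' := fun p hp =>
    (Finset.subset_biUnion_of_mem E hp).trans Finset.subset_union_right
  refine ⟨K', A + (t - σ) * γ, add_nonneg hA (mul_nonneg (sub_nonneg.2 hσt) hγ), fun D => ?_⟩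
  have hKK' : (#(innerBoundary K D) : ℝ) ≤ #(innerBoundary K' D) :=
    mod_cast Finset.card_le_card (innerBoundary_mono Finset.subset_union_left D)
  set m : ℝ := γ * (#D - #(innerBoundary K' D))
  set B : ℝ := t * #D - (t - σ) * m + A * #(innerBoundary K D) + θ * #D
  calc (coverNum 𝒰 D : ℝ) ≤ ∑ Q ∈ tilings E I D δ m, (coverNum 𝒰 (D \ tileUnion E Q) : ℝ) := by
        rw [← Nat.cast_sum, Nat.cast_le]
        exact coverNum_le_sum_tilings hU hleb hsel (fun p hp => (hN _ (hIN p hp)).1) hIcov hIK D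
    _ ≤ ∑ Q ∈ tilings E I D δ m, Real.exp B * ∏ q ∈ Q, w q.2 :=
        Finset.sum_le_sum fun Q hQ => coverNum_sdiff_tileUnion_le hA hrate hσ hσt hθ.le
          (fun p hp => (hN _ (hIN p hp)).2) hQ
    _ ≤ Real.exp B * Real.exp (#D * ∑ p ∈ I, w p) := by
        rw [← Finset.mul_sum]
        gcongr
        exact sum_tilings_prod_le E I D δ m fun p => (Real.exp_pos _).le
    _ ≤ Real.exp (t' * #D + (A + (t - σ) * γ) * #(innerBoundary K' D)) := by
        rw [← Real.exp_add, Real.exp_le_exp, ← htθ]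
        simp only [B, m]
        linarith [mul_le_mul_of_nonneg_left hIsum (Nat.cast_nonneg (α := ℝ) #D),
          mul_le_mul_of_nonneg_left hKK' hA]

lemma hasCoverRate_of_ballMN_eq_zero [DecidableEq G] [CompactSpace X] [ContinuousConstSMul G X]
    {F : ℕ → Finset G} {𝒰 : Finset (Set X)} {ε δ σ t : ℝ} (hF : IsFolnerSeq F)
    (hT : IsTemperedSeq F) (hne : ∀ᶠ n in atTop, (F n).Nonempty) (hδ : 0 < δ) (hδ1 : δ < 1)
    (hU : ⋃₀ (𝒰 : Set (Set X)) = Set.univ) (hleb : ∀ x, ∃ U ∈ 𝒰, Metric.ball x ε ⊆ U)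
    (hM : ballMN F (Set.univ : Set X) ε ((1 - δ) * σ) = 0) (hσ : 0 ≤ σ) (ht : σ < t) :
    HasCoverRate G 𝒰 t := by
  obtain ⟨γ, hγ, hsel⟩ := hT.exists_hasTileSelection hδ hδ1
  exact Ioi_subset_of_contracting hγ (isUpperSet_setOf_hasCoverRate 𝒰) ⟨_, hasCoverRate_card hU⟩
    (fun r hr hσr _ hr' => hr.improve hF hne hsel hγ.le hδ1 hU hleb hM hσ hσr hr') ht

lemma coverTopEnt_le_of_ballMN_eq_zero [CompactSpace X] [ContinuousConstSMul G X]
    {F : ℕ → Finset G} {𝒰 : Finset (Set X)} {ε s : ℝ} (hF : IsFolnerSeq F)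
    (hT : IsTemperedSeq F) (hne : ∀ᶠ n in atTop, (F n).Nonempty)
    (hU : ⋃₀ (𝒰 : Set (Set X)) = Set.univ) (hleb : ∀ x, ∃ U ∈ 𝒰, Metric.ball x ε ⊆ U)
    (hM : ballMN F (Set.univ : Set X) ε s = 0) : coverTopEnt F 𝒰 ≤ max s 0 := by
  classical
  refine le_of_forall_gt_imp_ge_of_dense fun σ hσ =>
    le_of_forall_gt_imp_ge_of_dense fun t ht => ?_
  obtain ⟨hsσ, hσ0⟩ := max_lt_iff.1 hσ
  obtain ⟨δ, hδ, hδσ⟩ : ∃ δ, 0 < δ ∧ δ < min 1 (1 - s / σ) :=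
    exists_between (lt_min one_pos (sub_pos.2 ((div_lt_one hσ0).2 hsσ)))
  obtain ⟨hδ1, hδs⟩ := lt_min_iff.1 hδσ
  have hsδ : s ≤ (1 - δ) * σ := ((div_lt_iff₀ hσ0).1 (lt_sub_comm.1 hδs)).le
  have hM' : ballMN F (Set.univ : Set X) ε ((1 - δ) * σ) = 0 :=
    le_zero_iff.1 ((ballMN_antitone F _ ε hsδ).trans hM.le)
  exact (hasCoverRate_of_ballMN_eq_zero hF hT hne hδ hδ1 hU hleb hM' hσ0.le ht).coverTopEnt_le
    hF hne (hσ0.trans ht).le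

lemma topEnt_le_bowenEnt_univ [CompactSpace X] [ContinuousConstSMul G X] {F : ℕ → Finset G}
    (hF : IsFolnerSeq F) (hT : IsTemperedSeq F) (hne : ∀ᶠ n in atTop, (F n).Nonempty) :
    topEnt X F ≤ bowenEnt F (Set.univ : Set X) := by
  refine le_iInf₂ fun s hs => iSup₂_le fun 𝒰 hU => ?_
  obtain ⟨ε, hε, hleb⟩ := lebesgue_number_lemma_of_metric_sUnion isCompact_univ hU.1 hU.2.ge
  have hM : ballMN F (Set.univ : Set X) ε s = 0 :=
    ENNReal.iSup_eq_zero.1 (ENNReal.iSup_eq_zero.1 hs ε) hε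
  calc ENNReal.ofReal (coverTopEnt F 𝒰) ≤ ENNReal.ofReal (max s 0) :=
        ENNReal.ofReal_le_ofReal
          (coverTopEnt_le_of_ballMN_eq_zero hF hT hne hU.2 (fun x => hleb x (mem_univ x)) hM)
    _ = ENNReal.ofReal s := by rw [ENNReal.ofReal_max, ENNReal.ofReal_zero, max_eq_left zero_le]

end LowerBound

/-! ### The upper bound for Bowen entropy -/

section UpperBound

lemma exists_isFinOpenCover_dist_lt [MetricSpace X] [CompactSpace X] {ε : ℝ} (hε : 0 < ε) :
    ∃ 𝒰 : Finset (Set X), IsFinOpenCover 𝒰 ∧ ∀ U ∈ 𝒰, ∀ x ∈ U, ∀ y ∈ U, dist x y < ε := by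
  classical
  obtain ⟨t, ht⟩ := isCompact_univ.elim_finite_subcover (fun x : X => Metric.ball x (ε / 2))
    (fun _ => Metric.isOpen_ball)
    fun x _ => Set.mem_iUnion.2 ⟨x, Metric.mem_ball_self (half_pos hε)⟩
  refine ⟨t.image fun x => Metric.ball x (ε / 2), ⟨?_, ?_⟩, ?_⟩
  · simpa only [Finset.forall_mem_image] using fun _ _ => Metric.isOpen_ball
  · rw [Finset.coe_image, sUnion_image]
    exact univ_subset_iff.1 ht
  · simp only [Finset.forall_mem_image, Metric.mem_ball]
    intro z _ x hx y hy
    linarith [dist_triangle_right x y z]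

variable [Group G] [MetricSpace X] [MulAction G X]

lemma exists_finset_card_le_coverNum {𝒰 : Finset (Set X)} {ε : ℝ}
    (hU : ⋃₀ (𝒰 : Set (Set X)) = Set.univ) (hfine : ∀ U ∈ 𝒰, ∀ x ∈ U, ∀ y ∈ U, dist x y < ε)
    (E : Finset G) :
    ∃ J : Finset X, #J ≤ coverNum 𝒰 E ∧ ∀ x, ∃ y ∈ J, x ∈ bowenBall E y ε := by
  classical
  obtain ⟨Λ, ⟨hΛ, hcov⟩, hcard⟩ := exists_isCylinderCover_card_eq_coverNum hU E
  have hpoint : ∀ u : G → Set X, ∃ J : Finset X, #J ≤ 1 ∧ (∀ y ∈ J, ∀ g ∈ E, g • y ∈ u g) ∧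
      ∀ x, (∀ g ∈ E, g • x ∈ u g) → J.Nonempty := by
    intro u
    by_cases hu : ∃ y, ∀ g ∈ E, g • y ∈ u g
    · obtain ⟨y, hy⟩ := hu
      exact ⟨{y}, by simp, by simpa using hy, by simp⟩
    · exact ⟨∅, by simp, by simp, fun x hx => (hu ⟨x, hx⟩).elim⟩
  choose J hJcard hJ hJne using hpoint
  refine ⟨Λ.biUnion J, ?_, fun x => ?_⟩
  · simpa only [mul_one, hcard] using Finset.card_biUnion_le_card_mul Λ J 1 fun u _ => hJcard u
  · obtain ⟨u, hu, hxu⟩ := hcov x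
    obtain ⟨y, hy⟩ := hJne u x hxu
    exact ⟨y, Finset.mem_biUnion.2 ⟨u, hu, hy⟩,
      fun g hg => hfine _ (hΛ u hu g hg) _ (hJ u y hy g hg) _ (hxu g hg)⟩

lemma ballM_univ_le_coverNum_mul {F : ℕ → Finset G} {𝒰 : Finset (Set X)} {ε : ℝ}
    (hU : ⋃₀ (𝒰 : Set (Set X)) = Set.univ) (hfine : ∀ U ∈ 𝒰, ∀ x ∈ U, ∀ y ∈ U, dist x y < ε)
    (s : ℝ) {N n : ℕ} (hn : N ≤ n) :
    ballM F (Set.univ : Set X) N ε s ≤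
      coverNum 𝒰 (F n) * ENNReal.ofReal (Real.exp (-s * #(F n))) := by
  obtain ⟨J, hJcard, hJ⟩ := exists_finset_card_le_coverNum hU hfine (F n)
  set I : Finset (X × ℕ) := J ×ˢ {n}
  have hIn : ∀ p ∈ I, p.2 = n := fun p hp => Finset.mem_singleton.1 (Finset.mem_product.1 hp).2
  have hcov : Set.univ ⊆ ⋃ p ∈ (I : Set (X × ℕ)), bowenBall (F p.2) p.1 ε := by
    intro x _
    obtain ⟨y, hy, hxy⟩ := hJ x
    exact Set.mem_iUnion₂.2 ⟨(y, n), by simpa [I] using hy, hxy⟩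
  calc ballM F (Set.univ : Set X) N ε s
      ≤ ∑' p : (I : Set (X × ℕ)), ENNReal.ofReal (Real.exp (-s * #(F (p : X × ℕ).2))) :=
        iInf₂_le_of_le (I : Set (X × ℕ)) I.countable_toSet
          (iInf₂_le (fun p hp => hn.trans_eq (hIn p hp).symm) hcov)
    _ = ∑ p ∈ I, ENNReal.ofReal (Real.exp (-s * #(F p.2))) :=
        Finset.tsum_subtype' I fun p : X × ℕ => ENNReal.ofReal (Real.exp (-s * #(F p.2)))
    _ = #J * ENNReal.ofReal (Real.exp (-s * #(F n))) := by
        rw [Finset.sum_congr rfl fun p hp => by rw [hIn p hp], Finset.sum_const, nsmul_eq_mul,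
          Finset.card_product, Finset.card_singleton, mul_one]
    _ ≤ coverNum 𝒰 (F n) * ENNReal.ofReal (Real.exp (-s * #(F n))) := by gcongr

lemma ballMN_univ_eq_zero_of_coverTopEnt_lt {F : ℕ → Finset G} {𝒰 : Finset (Set X)} {ε s : ℝ}
    (hcard : Tendsto (fun n => #(F n)) atTop atTop) (hU : ⋃₀ (𝒰 : Set (Set X)) = Set.univ)
    (hfine : ∀ U ∈ 𝒰, ∀ x ∈ U, ∀ y ∈ U, dist x y < ε) (hs : coverTopEnt F 𝒰 < s) :
    ballMN F (Set.univ : Set X) ε s = 0 := by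
  obtain ⟨c, hc, hcs⟩ := exists_between hs
  have hdecay : Tendsto (fun n => ENNReal.ofReal (Real.exp ((c - s) * #(F n)))) atTop (𝓝 0) := by
    rw [← ENNReal.ofReal_zero]
    exact ENNReal.tendsto_ofReal (Real.tendsto_exp_atBot.comp
      ((tendsto_natCast_atTop_atTop.comp hcard).const_mul_atTop_of_neg (sub_neg.2 hcs)))
  refine ENNReal.iSup_eq_zero.2 fun N => le_zero_iff.1 (ge_of_tendsto hdecay ?_)
  filter_upwards [eventually_lt_of_limsup_lt hc (isBoundedUnder_log_coverNum_div F hU),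
    hcard.eventually_gt_atTop 0, eventually_ge_atTop N] with n hlog hpos hn
  have hnum : (coverNum 𝒰 (F n) : ℝ) ≤ Real.exp (c * #(F n)) := by
    refine (Real.le_exp_log _).trans (Real.exp_le_exp.2 ?_)
    exact ((div_lt_iff₀ (mod_cast hpos)).1 hlog).le
  calc ballM F (Set.univ : Set X) N ε s
      ≤ coverNum 𝒰 (F n) * ENNReal.ofReal (Real.exp (-s * #(F n))) :=
        ballM_univ_le_coverNum_mul hU hfine s hn
    _ = ENNReal.ofReal (coverNum 𝒰 (F n) * Real.exp (-s * #(F n))) := by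
        rw [ENNReal.ofReal_mul (Nat.cast_nonneg _), ENNReal.ofReal_natCast]
    _ ≤ ENNReal.ofReal (Real.exp (c * #(F n)) * Real.exp (-s * #(F n))) := by gcongr
    _ = ENNReal.ofReal (Real.exp ((c - s) * #(F n))) := by
        rw [← Real.exp_add, sub_mul, neg_mul, sub_eq_add_neg]

lemma bowenEnt_univ_le_topEnt [CompactSpace X] {F : ℕ → Finset G}
    (hcard : Tendsto (fun n => #(F n)) atTop atTop) :
    bowenEnt F (Set.univ : Set X) ≤ topEnt X F := by
  by_contra! hlt
  obtain ⟨s, htop, hbowen⟩ := ENNReal.lt_iff_exists_nnreal_btwn.1 hlt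
  have hzero : ballMtot F (Set.univ : Set X) s = 0 := by
    refine ENNReal.iSup_eq_zero.2 fun ε => ENNReal.iSup_eq_zero.2 fun hε => ?_
    obtain ⟨𝒰, hU, hfine⟩ := exists_isFinOpenCover_dist_lt (X := X) hε
    refine ballMN_univ_eq_zero_of_coverTopEnt_lt hcard hU.2 hfine ?_
    rw [← ENNReal.ofReal_coe_nnreal] at htop
    exact (ENNReal.ofReal_lt_ofReal_iff').1
      ((le_iSup₂ (f := fun 𝒰 (_ : IsFinOpenCover 𝒰) =>
        ENNReal.ofReal (coverTopEnt F 𝒰)) 𝒰 hU).trans_lt htop) |>.1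
  refine hbowen.not_ge ?_
  rw [← ENNReal.ofReal_coe_nnreal]
  exact iInf₂_le (s : ℝ) hzero

end UpperBound

lemma GrowthCond.tendsto_card {F : ℕ → Finset G} (hF : GrowthCond F) :
    Tendsto (fun n => #(F n)) atTop atTop := by
  have hlog : Tendsto (fun n : ℕ => Real.log n) atTop atTop :=
    Real.tendsto_log_atTop.comp tendsto_natCast_atTop_atTop
  refine tendsto_natCast_atTop_iff.1 (tendsto_atTop_mono' atTop ?_ hlog)
  filter_upwards [hF.eventually_ge_atTop 1, hlog.eventually_gt_atTop 0] with n hratio hpos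
  rwa [le_div_iff₀ hpos, one_mul] at hratio

theorem bowenEnt_univ_eq_topEnt_general
    [Group G] [MetricSpace X] [CompactSpace X]
    [MulAction G X] [ContinuousConstSMul G X]
    (F : ℕ → Finset G) (hFol : IsFolnerSeq F) (hTemp : IsTemperedSeq F)
    (hcard : Tendsto (fun n => (F n).card) atTop atTop) :
    bowenEnt F (Set.univ : Set X) = topEnt (G := G) X F :=
  le_antisymm (bowenEnt_univ_le_topEnt hcard) <|
    topEnt_le_bowenEnt_univ hFol hTemp <|
      (hcard.eventually_gt_atTop 0).mono fun _ => Finset.card_pos.1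

/-- Main result. For a countable discrete amenable group `G` acting
continuously on a compact metric space `X` and any tempered Følner sequence `{F_n}` with
`lim_n |F_n|/log n = ∞`, the Bowen topological entropy of the whole space equals the
topological entropy. -/
theorem bowenEnt_univ_eq_topEnt
    [Group G] [Countable G] [MetricSpace X] [CompactSpace X]
    [MulAction G X] [ContinuousConstSMul G X]
    (F : ℕ → Finset G) (hFol : IsFolnerSeq F) (hTemp : IsTemperedSeq F)
    (hGrow : GrowthCond F) :
    bowenEnt F (Set.univ : Set X) = topEnt (G := G) X F :=
  bowenEnt_univ_eq_topEnt_general F hFol hTemp hGrow.tendsto_card
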